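/- arXiv:2005.09767 — 2 statements merged into one kernel-verified Lean document; each statement's English description precedes it below -/
import Mathlib

section
/- Let k and q be integers with 0 < k < q, let G=(V,E) be an oriented graph, and let S ⊆ E be a k-base. Then for every function f: E \ S → Z/q there exists a flow φ: E → Z/q satisfying φ(e) ≠ f(e) for every e ∈ E \ S. -/
open scoped Classical

/-- A multigraph with an orientation: each edge `e` has a source `src e` and a target `tgt e`.
Loops and parallel edges are allowed. -/
structure Multigraph (V E : Type) where
  src : E → V
  tgt : E → V

namespace Multigraph

variable {V E : Type}

/-- `u` and `v` are joined by some edge satisfying the predicate `P`. -/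
def adjVia (G : Multigraph V E) (P : E → Prop) (u v : V) : Prop :=
  ∃ e, P e ∧ ((G.src e = u ∧ G.tgt e = v) ∨ (G.src e = v ∧ G.tgt e = u))

/-- `v` is reachable from `u` using only edges satisfying `P`. -/
def Reaches (G : Multigraph V E) (P : E → Prop) : V → V → Prop :=
  Relation.ReflTransGen (G.adjVia P)

/-- The graph is connected when only edges satisfying `P` are kept (all edges deleted
whose predicate fails, all vertices kept). -/
def ConnectedVia (G : Multigraph V E) (P : E → Prop) : Prop :=
  Nonempty V ∧ ∀ u v : V, G.Reaches P u v

def Connected (G : Multigraph V E) : Prop :=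
  G.ConnectedVia fun _ => True

/-- `G` is `k`-edge-connected: it is connected and has no edge cut of size less than `k`;
equivalently, deleting any set of fewer than `k` edges leaves it connected. -/
def EdgeConnected (G : Multigraph V E) (k : ℕ) : Prop :=
  ∀ S : Set E, S.ncard < k → G.ConnectedVia fun e => e ∉ S

/-- The degree of a vertex (loops counted twice). -/
noncomputable def degree (G : Multigraph V E) (v : V) : ℕ :=
  {e | G.src e = v}.ncard + {e | G.tgt e = v}.ncard

/-- Every vertex has degree exactly 3. -/
def Cubic (G : Multigraph V E) : Prop :=
  ∀ v : V, G.degree v = 3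

/-- `φ : E → Γ` is a flow: at every vertex, the sum over outgoing edges equals the
sum over incoming edges. -/
def IsFlow [Fintype E] {Γ : Type} [AddCommGroup Γ] (G : Multigraph V E) (φ : E → Γ) : Prop :=
  ∀ v : V, (∑ e : E, if G.src e = v then φ e else 0) = ∑ e : E, if G.tgt e = v then φ e else 0

/-- The vertex `v` is an endpoint of some edge of `C`. -/
def touches (G : Multigraph V E) (C : Set E) (v : V) : Prop :=
  ∃ e ∈ C, G.src e = v ∨ G.tgt e = v

/-- An edge set `C` is (the edge set of) a cycle: it is nonempty, every vertex it touches
has degree exactly 2 in it, and it is connected. -/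
def IsCycle (G : Multigraph V E) (C : Set E) : Prop :=
  C.Nonempty ∧
  (∀ v : V, G.touches C v →
    ({e ∈ C | G.src e = v}.ncard + {e ∈ C | G.tgt e = v}.ncard = 2)) ∧
  (∀ u v : V, G.touches C u → G.touches C v → G.Reaches (· ∈ C) u v)

/-- `R` is `k`-closed: every cycle with at least one edge outside `R` has at least
`k+1` edges outside `R`. -/
def Closed (G : Multigraph V E) (k : ℕ) (R : Set E) : Prop :=
  ∀ C : Set E, G.IsCycle C → (C \ R).Nonempty → k + 1 ≤ (C \ R).ncard

/-- The `k`-closure `⟨S⟩ₖ` of `S` : the minimal `k`-closed set containing `S`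
(the family of `k`-closed sets is closed under intersections). -/
def kClosure (G : Multigraph V E) (k : ℕ) (S : Set E) : Set E :=
  ⋂₀ {R : Set E | S ⊆ R ∧ G.Closed k R}

/-- `S` is a `k`-base: its `k`-closure is the whole edge set. -/
def IsBase (G : Multigraph V E) (k : ℕ) (S : Set E) : Prop :=
  G.kClosure k S = Set.univ

/-- An edge set `S` is peripheral if `G − S` is connected. -/
def Peripheral (G : Multigraph V E) (S : Set E) : Prop :=
  G.ConnectedVia fun e => e ∉ S

/-- The spanning subgraph `(V, F)` is a forest, i.e. contains no cycle. -/
def IsForest (G : Multigraph V E) (F : Set E) : Prop :=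
  ∀ C : Set E, G.IsCycle C → ¬ C ⊆ F

/-- `vs`, `es` describe a path: distinct vertices `vs 0, …, vs n` and distinct edges
`es 0, …, es (n-1)` where `es i` joins `vs i` and `vs (i+1)`. -/
def IsPath (G : Multigraph V E) {n : ℕ} (vs : Fin (n + 1) → V) (es : Fin n → E) : Prop :=
  Function.Injective vs ∧ Function.Injective es ∧
  ∀ i : Fin n,
    (G.src (es i) = vs i.castSucc ∧ G.tgt (es i) = vs i.succ) ∨
    (G.src (es i) = vs i.succ ∧ G.tgt (es i) = vs i.castSucc)

/-- The edge `e` has `y` as one endpoint and its other endpoint in `X`,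
i.e. `e ∈ E(y, X)`. -/
def joins (G : Multigraph V E) (e : E) (y : V) (X : Set V) : Prop :=
  (G.src e = y ∧ G.tgt e ∈ X) ∨ (G.tgt e = y ∧ G.src e ∈ X)

/-- `W` is the vertex set of a connected component of `G − X`. -/
def IsComponent (G : Multigraph V E) (X W : Set V) : Prop :=
  W.Nonempty ∧ Disjoint W X ∧
  (∀ u ∈ W, ∀ v : V, v ∉ X → G.adjVia (fun _ => True) u v → v ∈ W) ∧
  (∀ u ∈ W, ∀ v ∈ W, G.Reaches (fun e => G.src e ∉ X ∧ G.tgt e ∉ X) u v)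

/-- The subgraph induced on `W`, with only those of its edges satisfying `P` kept,
is connected. -/
def ConnectedOn (G : Multigraph V E) (W : Set V) (P : E → Prop) : Prop :=
  ∀ u ∈ W, ∀ v ∈ W, G.Reaches (fun e => P e ∧ G.src e ∈ W ∧ G.tgt e ∈ W) u v

/-- The subgraph induced on `W` is `k`-edge-connected. -/
def EdgeConnectedOn (G : Multigraph V E) (W : Set V) (k : ℕ) : Prop :=
  ∀ S : Set E, S.ncard < k → G.ConnectedOn W fun e => e ∉ S

/-- Some cycle lies entirely inside the vertex set `X`. -/
def HasCycleIn (G : Multigraph V E) (X : Set V) : Prop :=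
  ∃ C : Set E, G.IsCycle C ∧ ∀ e ∈ C, G.src e ∈ X ∧ G.tgt e ∈ X

/-- The edge cut `E(X, V \ X)`. -/
def cutEdges (G : Multigraph V E) (X : Set V) : Set E :=
  {e | (G.src e ∈ X ∧ G.tgt e ∉ X) ∨ (G.src e ∉ X ∧ G.tgt e ∈ X)}

/-- A cubic graph is cyclically `k`-edge-connected if every edge cut separating two
cycle-containing parts has at least `k` edges. -/
def CyclicallyEdgeConnected (G : Multigraph V E) (k : ℕ) : Prop :=
  ∀ X : Set V, G.HasCycleIn X → G.HasCycleIn Xᶜ → k ≤ (G.cutEdges X).ncard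

/-- `G` is 3-connected: more than 3 vertices, connected, and still connected after
deleting any two vertices. -/
def ThreeConnected [Fintype V] (G : Multigraph V E) : Prop :=
  3 < Fintype.card V ∧ G.Connected ∧
    ∀ u v : V, G.ConnectedOn {w : V | w ≠ u ∧ w ≠ v} fun _ => True

/-- The graph `G − r` obtained by deleting the vertex `r` and all incident edges. -/
def deleteVertex (G : Multigraph V E) (r : V) :
    Multigraph {v : V // v ≠ r} {e : E // G.src e ≠ r ∧ G.tgt e ≠ r} where
  src e := ⟨G.src e.1, e.2.1⟩
  tgt e := ⟨G.tgt e.1, e.2.2⟩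

end Multigraph

/-- Two fixed-point-free involutions of a type admit a common sign function that both reverse:
the union of two perfect matchings is bipartite. -/
theorem exists_sign_of_involutive {D : Type*} (α β : D → D)
    (hα : Function.Involutive α) (hβ : Function.Involutive β)
    (hα' : ∀ d, α d ≠ d) (hβ' : ∀ d, β d ≠ d) :
    ∃ σ : D → ℤ, (∀ d, σ d = 1 ∨ σ d = -1) ∧ (∀ d, σ (α d) = -σ d) ∧
      ∀ d, σ (β d) = -σ d := by
  let a : Equiv.Perm D := hα.toPerm
  let b : Equiv.Perm D := hβ.toPerm
  let p : Equiv.Perm D := a * b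
  have ha : a⁻¹ = a := rfl
  have hb : b⁻¹ = b := rfl
  have haa : a * a = 1 := by rw [← mul_inv_cancel a, ha]
  have hconj : a * p * a⁻¹ = p⁻¹ := by
    simp only [p, mul_inv_rev, ha, hb]
    rw [← mul_assoc, haa, one_mul]
  have hcomm (m : ℤ) (d : D) : α ((p ^ m) d) = (p ^ (-m)) (α d) := by
    have h : a * p ^ m * a⁻¹ = p ^ (-m) := by
      rw [← conj_zpow, hconj, inv_zpow, zpow_neg]
    have h' : a * p ^ m = p ^ (-m) * a := by rw [← h, inv_mul_cancel_right]
    exact congrArg (fun g : Equiv.Perm D => g d) h'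
  have hne (d : D) : ¬ p.SameCycle d (α d) := by
    rintro ⟨n, hn⟩
    obtain ⟨m, rfl | rfl⟩ := Int.even_or_odd' n
    · apply hα' ((p ^ m) d)
      rw [hcomm, ← hn, ← Equiv.Perm.mul_apply, ← zpow_add]
      congr 2
      ring
    · have h : α ((p ^ m) d) = α (β ((p ^ m) d)) := by
        rw [hcomm, ← hn, ← Equiv.Perm.mul_apply, ← zpow_add,
          show -m + (2 * m + 1) = 1 + m by ring, zpow_add, zpow_one]
        rfl
      exact hβ' _ (hα.injective h).symm
  let r : D → Quotient (Equiv.Perm.SameCycle.setoid p) := Quotient.mk _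
  let _ : LinearOrder (Quotient (Equiv.Perm.SameCycle.setoid p)) :=
    linearOrderOfSTO WellOrderingRel
  have hr (d : D) : r d ≠ r (α d) := fun h => hne d (Quotient.exact h)
  have hstep (d : D) : r (α (β d)) = r d :=
    Quotient.sound ((Equiv.Perm.sameCycle_apply_left (f := p)).2 (Equiv.Perm.SameCycle.refl p d))
  have hrβ (d : D) : r (β d) = r (α d) := by
    have h := hstep (β d)
    rw [hβ d] at h
    exact h.symm
  refine ⟨fun d => if r d < r (α d) then 1 else -1, fun d => ?_, fun d => ?_, fun d => ?_⟩
  · dsimp only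
    split_ifs <;> simp
  · rcases lt_or_gt_of_ne (hr d) with h | h
    · simp [hα d, h, h.le]
    · simp [hα d, h, h.not_gt]
  · rcases lt_or_gt_of_ne (hr d) with h | h
    · simp [hrβ, hstep, h, h.le]
    · simp [hrβ, hstep, h, h.not_gt]

/-- A map all of whose fibers (over its image) have exactly two elements admits a
fixed-point-free involution preserving it. -/
theorem exists_involutive_of_card_fiber_eq_two {D V : Type*} (g : D → V)
    (h : ∀ d, {d' | g d' = g d}.ncard = 2) :
    ∃ β : D → D, Function.Involutive β ∧ (∀ d, β d ≠ d) ∧ ∀ d, g (β d) = g d := by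
  have key (d : D) : ∃ d', d' ≠ d ∧ g d' = g d ∧ ∀ x, g x = g d → x = d ∨ x = d' := by
    obtain ⟨x, y, hxy, hs⟩ := Set.ncard_eq_two.1 (h d)
    have hm (z : D) : g z = g d ↔ z = x ∨ z = y := by
      have : z ∈ {d' | g d' = g d} ↔ z ∈ ({x, y} : Set D) := by rw [hs]
      simpa using this
    rcases (hm d).1 rfl with rfl | rfl
    · exact ⟨y, hxy.symm, (hm y).2 (Or.inr rfl), fun z hz => (hm z).1 hz⟩
    · exact ⟨x, hxy, (hm x).2 (Or.inl rfl), fun z hz => ((hm z).1 hz).symm⟩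
  choose β hne hg hall using key
  refine ⟨β, fun d => ?_, hne, hg⟩
  rcases hall d (β (β d)) ((hg _).trans (hg d)) with h' | h'
  · exact h'
  · exact absurd h' (hne _)

namespace Multigraph

/-- Every cycle carries an integer flow with values `±1` on the cycle and `0` off it. -/
theorem IsCycle.exists_unit_flow {V E : Type} [Fintype E] {G : Multigraph V E} {C : Set E}
    (hC : G.IsCycle C) :
    ∃ ψ : E → ℤ, G.IsFlow ψ ∧ (∀ e ∈ C, ψ e = 1 ∨ ψ e = -1) ∧ ∀ e ∉ C, ψ e = 0 := by
  let g : C × Bool → V := fun d => if d.2 then G.src d.1 else G.tgt d.1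
  have hfib (d : C × Bool) : {d' | g d' = g d}.ncard = 2 := by
    have ht : G.touches C (g d) := by
      obtain ⟨⟨e, he⟩, b⟩ := d
      exact ⟨e, he, by cases b <;> simp [g]⟩
    rw [← hC.2.1 _ ht]
    generalize g d = v
    have hsplit : {d' | g d' = v} = (fun e : C => (e, true)) '' {e : C | G.src e = v} ∪
        (fun e : C => (e, false)) '' {e : C | G.tgt e = v} := by
      ext ⟨e, b⟩
      cases b <;> simp [g]
    have hval (P : E → Prop) : {e : C | P e}.ncard = {e ∈ C | P e}.ncard := by
      rw [← Set.ncard_image_of_injective _ Subtype.val_injective]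
      congr 1
      ext e
      simp [and_comm]
    rw [hsplit, Set.ncard_union_eq, Set.ncard_image_of_injective, Set.ncard_image_of_injective,
      hval fun e => G.src e = v, hval fun e => G.tgt e = v]
    · exact fun x y hxy => congrArg Prod.fst hxy
    · exact fun x y hxy => congrArg Prod.fst hxy
    · rw [Set.disjoint_left]
      rintro _ ⟨x, -, rfl⟩ ⟨y, -, h⟩
      simp at h
  obtain ⟨β, hβ, hβ', hgβ⟩ := exists_involutive_of_card_fiber_eq_two g hfib
  obtain ⟨σ, hσ, hσα, hσβ⟩ := exists_sign_of_involutive (fun d : C × Bool => (d.1, !d.2)) β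
    (fun d => by simp) hβ (fun d h => by simpa using congrArg Prod.snd h) hβ'
  refine ⟨fun e => if h : e ∈ C then σ (⟨e, h⟩, true) else 0, fun v => ?_,
    fun e he => by simpa [he] using hσ _, fun e he => by simp [he]⟩
  have hsum : ∑ d : C × Bool, (if g d = v then σ d else 0) = 0 := by
    refine Finset.sum_involution (fun d _ => β d) ?_ ?_ ?_ ?_
    · intro d _
      by_cases h : g d = v <;> simp [hgβ, hσβ, h]
    · exact fun d _ _ => hβ' d
    · exact fun d _ => Finset.mem_univ _
    · exact fun d _ => hβ d
  have hfalse (e : C) : σ (e, false) = -σ (e, true) := hσα (e, true)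
  have hext (P : E → Prop) :
      (∑ e : E, if P e then (if h : e ∈ C then σ (⟨e, h⟩, true) else 0) else 0) =
        ∑ e : C, if P e then σ (e, true) else 0 := by
    rw [← Fintype.sum_subtype_add_sum_subtype (fun e => e ∈ C)]
    have hoff : (∑ e : {e // e ∉ C}, if P e then
        (if h : (e : E) ∈ C then σ (⟨e, h⟩, true) else 0) else 0) = 0 :=
      Finset.sum_eq_zero fun e _ => by simp [e.2]
    rw [hoff, add_zero]
    exact Finset.sum_congr rfl fun e _ => by simp
  rw [Fintype.sum_prod_type] at hsum
  rw [hext fun e => G.src e = v, hext fun e => G.tgt e = v, ← sub_eq_zero,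
    ← Finset.sum_sub_distrib]
  refine (Finset.sum_congr rfl fun e _ => ?_).trans hsum
  by_cases h : G.tgt e = v <;> simp [g, hfalse, h, sub_eq_add_neg]

/-- Adding a multiple of an integer flow to a flow gives a flow. -/
theorem IsFlow.add_mul_intCast {V E R : Type} [Fintype E] [Ring R] {G : Multigraph V E}
    {φ : E → R} {ψ : E → ℤ} (hφ : G.IsFlow φ) (hψ : G.IsFlow ψ) (c : R) :
    G.IsFlow fun e => φ e + c * (ψ e : R) := by
  intro v
  have hsplit (P : E → Prop) : (∑ e, if P e then φ e + c * (ψ e : R) else 0) =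
      (∑ e, if P e then φ e else 0) + c * ((∑ e, if P e then ψ e else 0 : ℤ) : R) := by
    push_cast
    rw [Finset.mul_sum, ← Finset.sum_add_distrib]
    refine Finset.sum_congr rfl fun e _ => ?_
    by_cases h : P e <;> simp [h]
  rw [hsplit fun e => G.src e = v, hsplit fun e => G.tgt e = v, hφ v, hψ v]

/-- A flow avoiding `f` off `R ∪ C`, where the cycle `C` has at most `k < q` edges outside `R`,
can be changed along `C` to avoid `f` off `R`. -/
theorem IsCycle.exists_flow_avoiding {V E : Type} [Fintype E] {G : Multigraph V E} {C R : Set E}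
    (hC : G.IsCycle C) {q : ℕ} (hq : (C \ R).ncard < q) {f φ : E → ZMod q} (hφ : G.IsFlow φ)
    (havoid : ∀ e ∉ R ∪ C, φ e ≠ f e) :
    ∃ φ' : E → ZMod q, G.IsFlow φ' ∧ ∀ e ∉ R, φ' e ≠ f e := by
  have : NeZero q := ⟨by omega⟩
  obtain ⟨ψ, hψ, hone, hzero⟩ := hC.exists_unit_flow
  obtain ⟨c, hc⟩ : ∃ c, c ∉ (fun e => (f e - φ e) * (ψ e : ZMod q)) '' (C \ R) := by
    by_contra! hall
    have hle := Set.ncard_image_le (f := fun e => (f e - φ e) * (ψ e : ZMod q))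
      (Set.toFinite (C \ R))
    rw [Set.eq_univ_of_forall hall, Set.ncard_univ, Nat.card_zmod] at hle
    omega
  refine ⟨_, hφ.add_mul_intCast hψ c, fun e he h => ?_⟩
  by_cases heC : e ∈ C
  · refine hc ⟨e, ⟨heC, he⟩, ?_⟩
    dsimp only
    rw [← h]
    rcases hone e heC with h1 | h1 <;> simp [h1]
  · exact havoid e (by simp [he, heC]) (by simpa [hzero e heC] using h)

/-- A proper superset of a `k`-base is not `k`-closed. -/
theorem IsBase.not_closed {V E : Type} {G : Multigraph V E} {k : ℕ} {S R : Set E}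
    (hS : G.IsBase k S) (hSR : S ⊆ R) (hR : R ≠ Set.univ) : ¬ G.Closed k R := by
  intro hcl
  apply hR
  rw [Set.eq_univ_iff_forall]
  intro e
  have he : e ∈ G.kClosure k S := by rw [hS]; trivial
  exact he R ⟨hSR, hcl⟩

end Multigraph

/-- If `0 < k < q` and `S` is a `k`-base of `G`, then for every `f : E → ℤ_q` there is a
flow `φ : E → ℤ_q` with `φ(e) ≠ f(e)` for every edge `e ∉ S`. -/
theorem kBase_gives_flow_avoiding_f {V E : Type} [Fintype V] [Fintype E]
    (G : Multigraph V E) (k q : ℕ) (hk : 0 < k) (hkq : k < q)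
    (S : Set E) (hS : G.IsBase k S) (f : E → ZMod q) :
    ∃ φ : E → ZMod q, G.IsFlow φ ∧ ∀ e : E, e ∉ S → φ e ≠ f e := by
  suffices h : ∀ R : Set E, S ⊆ R → ∃ φ : E → ZMod q, G.IsFlow φ ∧ ∀ e ∉ R, φ e ≠ f e from
    h S subset_rfl
  intro R
  induction R using WellFoundedGT.induction with
  | ind R ih =>
    intro hSR
    by_cases hR : R = Set.univ
    · exact ⟨0, fun v => by simp, fun e he => absurd (hR ▸ Set.mem_univ e) he⟩
    · have hcl := hS.not_closed hSR hR
      simp only [Multigraph.Closed, not_forall, not_le] at hcl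
      obtain ⟨C, hC, ⟨e, heC, heR⟩, hcard⟩ := hcl
      have hlt : R < R ∪ C :=
        Set.ssubset_iff_of_subset Set.subset_union_left |>.2 ⟨e, Or.inr heC, heR⟩
      obtain ⟨φ, hφ, havoid⟩ := ih _ hlt (hSR.trans Set.subset_union_left)
      exact hC.exists_flow_avoiding (by omega) hφ havoid
end

section
/- Every oriented 3-edge-connected graph is Z/6-connected; that is, for every oriented 3-edge-connected graph G=(V,E) and every function f: E → Z/6 there exists a flow φ: E → Z/6 with φ(e) ≠ f(e) for every e ∈ E. -/
open scoped Classical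

namespace Multigraph

variable {V E : Type}

/-! ### Reachability -/

/-- The edge `e` has endpoints `a` and `b`. -/
def IsLink (G : Multigraph V E) (e : E) (a b : V) : Prop :=
  (G.src e = a ∧ G.tgt e = b) ∨ (G.src e = b ∧ G.tgt e = a)

/-- Both endpoints of `e` lie in `W`. -/
def Inside (G : Multigraph V E) (W : Set V) (e : E) : Prop :=
  G.src e ∈ W ∧ G.tgt e ∈ W

variable {G : Multigraph V E} {P P' : E → Prop} {e f : E} {a b u v w : V} {W X : Set V}

lemma IsLink.symm (h : G.IsLink e a b) : G.IsLink e b a := Or.symm h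

lemma isLink_src_tgt (G : Multigraph V E) (e : E) : G.IsLink e (G.src e) (G.tgt e) :=
  Or.inl ⟨rfl, rfl⟩

lemma IsLink.inside_iff (h : G.IsLink e a b) : G.Inside W e ↔ a ∈ W ∧ b ∈ W := by
  rcases h with ⟨rfl, rfl⟩ | ⟨rfl, rfl⟩
  · rfl
  · exact and_comm

lemma IsLink.reaches (h : G.IsLink e a b) (he : P e) : G.Reaches P a b :=
  Relation.ReflTransGen.single ⟨e, he, h⟩

lemma Reaches.trans (h : G.Reaches P u v) (h' : G.Reaches P v w) : G.Reaches P u w :=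
  Relation.ReflTransGen.trans h h'

lemma reaches_refl (G : Multigraph V E) (P : E → Prop) (u : V) : G.Reaches P u u :=
  Relation.ReflTransGen.refl

/-- To build a property along reachability, extend it over one edge at a time. -/
lemma Reaches.rec_link {p : V → Prop} (h : G.Reaches P u v) (hu : p u)
    (step : ∀ e a b, P e → G.IsLink e a b → G.Reaches P u a → p a → p b) : p v := by
  induction h with
  | refl => exact hu
  | tail h1 h2 ih =>
    obtain ⟨e, he, hl⟩ := h2
    exact step e _ _ he hl h1 ih

lemma Reaches.mono (hP : ∀ e, P e → P' e) (h : G.Reaches P u v) : G.Reaches P' u v :=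
  h.rec_link (p := G.Reaches P' u) (reaches_refl G P' u) fun e _ _ he hl _ ih =>
    ih.trans (hl.reaches (hP e he))

lemma Reaches.symm (h : G.Reaches P u v) : G.Reaches P v u :=
  h.rec_link (p := fun v => G.Reaches P v u) (reaches_refl G P u) fun _ _ _ he hl _ ih =>
    (hl.symm.reaches he).trans ih

/-- Replacing every edge by a walk. -/
lemma Reaches.bind (h : G.Reaches P u v)
    (hP : ∀ e, P e → G.Reaches P' (G.src e) (G.tgt e)) : G.Reaches P' u v := by
  refine h.rec_link (reaches_refl G P' u) fun e a b he hl _ ih => ih.trans ?_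
  rcases hl with ⟨rfl, rfl⟩ | ⟨rfl, rfl⟩
  · exact hP e he
  · exact (hP e he).symm

/-- A walk leaving `W` uses an edge leaving `W`. -/
lemma Reaches.exists_exit (h : G.Reaches P u v) (hu : u ∈ W) (hv : v ∉ W) :
    ∃ e a b, P e ∧ G.IsLink e a b ∧ a ∉ W ∧ b ∈ W := by
  by_contra! hcon
  refine hv (h.rec_link (p := (· ∈ W)) hu fun e a b he hl _ ih => ?_)
  by_contra hb
  exact hcon e b a he hl.symm hb ih

/-- A walk either avoids a given edge or splits at it into two walks avoiding that edge. -/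
lemma Reaches.split (h : G.Reaches P u v) (hf : G.IsLink f a b) :
    G.Reaches (fun e => P e ∧ e ≠ f) u v ∨
    (G.Reaches (fun e => P e ∧ e ≠ f) u a ∧ G.Reaches (fun e => P e ∧ e ≠ f) b v) ∨
    (G.Reaches (fun e => P e ∧ e ≠ f) u b ∧ G.Reaches (fun e => P e ∧ e ≠ f) a v) := by
  refine h.rec_link (p := fun v => G.Reaches (fun e => P e ∧ e ≠ f) u v ∨
    (G.Reaches (fun e => P e ∧ e ≠ f) u a ∧ G.Reaches (fun e => P e ∧ e ≠ f) b v) ∨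
    (G.Reaches (fun e => P e ∧ e ≠ f) u b ∧ G.Reaches (fun e => P e ∧ e ≠ f) a v))
    (Or.inl (reaches_refl G _ u)) fun e c d he hl _ ih => ?_
  by_cases hef : e = f
  · subst hef
    have hcd : (c = a ∧ d = b) ∨ (c = b ∧ d = a) := by
      rcases hl with ⟨rfl, rfl⟩ | ⟨rfl, rfl⟩ <;> rcases hf with ⟨h1, h2⟩ | ⟨h1, h2⟩ <;>
        simp [h1, h2]
    rcases hcd with ⟨rfl, rfl⟩ | ⟨rfl, rfl⟩
    · rcases ih with ih | ih | ih
      · exact Or.inr (Or.inl ⟨ih, reaches_refl G _ _⟩)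
      · exact Or.inr (Or.inl ⟨ih.1, reaches_refl G _ _⟩)
      · exact Or.inl ih.1
    · rcases ih with ih | ih | ih
      · exact Or.inr (Or.inr ⟨ih, reaches_refl G _ _⟩)
      · exact Or.inl ih.1
      · exact Or.inr (Or.inr ⟨ih.1, reaches_refl G _ _⟩)
  · have hs : G.Reaches (fun e => P e ∧ e ≠ f) c d := hl.reaches ⟨he, hef⟩
    rcases ih with ih | ih | ih
    · exact Or.inl (ih.trans hs)
    · exact Or.inr (Or.inl ⟨ih.1, ih.2.trans hs⟩)
    · exact Or.inr (Or.inr ⟨ih.1, ih.2.trans hs⟩)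

lemma EdgeConnected.le_ncard_cutEdges {k : ℕ} (hG : G.EdgeConnected k) (hu : u ∈ W)
    (hv : v ∉ W) : k ≤ (G.cutEdges W).ncard := by
  by_contra! hlt
  obtain ⟨e, a, b, he, hl, ha, hb⟩ := ((hG _ hlt).2 u v).exists_exit hu hv
  apply he
  rcases hl with ⟨rfl, rfl⟩ | ⟨rfl, rfl⟩
  · exact Or.inr ⟨ha, hb⟩
  · exact Or.inl ⟨hb, ha⟩

lemma exists_isLink_of_mem_cutEdges (he : e ∈ G.cutEdges W) :
    ∃ a b, G.IsLink e a b ∧ a ∉ W ∧ b ∈ W := by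
  rcases he with ⟨h1, h2⟩ | ⟨h1, h2⟩
  · exact ⟨_, _, Or.inr ⟨rfl, rfl⟩, h2, h1⟩
  · exact ⟨_, _, Or.inl ⟨rfl, rfl⟩, h1, h2⟩

/-! ### Nonseparating connections between two boundary edges -/

/-- Edges inside `W` lying in `F` connect the `W`-ends of two distinct edges leaving `W`. -/
def Bridges (G : Multigraph V E) (W : Set V) (F : Set E) : Prop :=
  (∀ e ∈ F, G.Inside W e) ∧
  ∃ (d : Bool → E) (p q : Bool → V), d true ≠ d false ∧
    (∀ i, G.IsLink (d i) (q i) (p i) ∧ p i ∈ W ∧ q i ∉ W) ∧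
    G.Reaches (· ∈ F) (p true) (p false)

/-- In a 3-edge-connected graph, inside every connected proper vertex set `W`, the ends of two
distinct boundary edges can be connected by an edge set whose removal does not disconnect `W`. -/
theorem exists_bridges_nonseparating [Finite V] [Finite E] (hG : G.EdgeConnected 3) {z : V}
    (hz : z ∈ W) (hX : v ∉ W) (hconn : ∀ u ∈ W, G.Reaches (G.Inside W) z u) :
    ∃ F, G.Bridges W F ∧ ∀ u ∈ W, G.Reaches (fun e => e ∉ F ∧ G.Inside W e) z u := by
  have hne : {F | G.Bridges W F}.Nonempty := by
    have h3 := hG.le_ncard_cutEdges hz hX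
    obtain ⟨d₁, hd₁, d₂, hd₂, hd⟩ := (Set.one_lt_ncard (Set.toFinite _)).1
      (by omega : 1 < (G.cutEdges W).ncard)
    obtain ⟨q₁, p₁, hl₁, hq₁, hp₁⟩ := exists_isLink_of_mem_cutEdges hd₁
    obtain ⟨q₂, p₂, hl₂, hq₂, hp₂⟩ := exists_isLink_of_mem_cutEdges hd₂
    refine ⟨{e | G.Inside W e}, fun e he => he, fun i => cond i d₁ d₂, fun i => cond i p₁ p₂,
      fun i => cond i q₁ q₂, hd, ?_, (hconn p₁ hp₁).symm.trans (hconn p₂ hp₂)⟩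
    rintro (_ | _)
    · exact ⟨hl₂, hp₂, hq₂⟩
    · exact ⟨hl₁, hp₁, hq₁⟩
  -- `F` maximizes the part of `W` reachable from `z` without using `F`.
  obtain ⟨F, hF, hmax⟩ := Set.exists_max_image {F | G.Bridges W F}
    (fun F => {u | G.Reaches (fun e => e ∉ F ∧ G.Inside W e) z u}.ncard) (Set.toFinite _) hne
  refine ⟨F, hF, ?_⟩
  by_contra! hcon
  obtain ⟨b₀, hb₀W, hb₀⟩ := hcon
  set K : Set V := {u | G.Reaches (fun e => e ∉ F ∧ G.Inside W e) z u} with hK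
  set U : Set V := W \ K with hU
  set B : Set V := {u | G.Reaches (G.Inside U) b₀ u} with hB
  have hb₀U : b₀ ∈ U := ⟨hb₀W, hb₀⟩
  have hzK : z ∈ K := reaches_refl G _ z
  have hBU : ∀ u ∈ B, u ∈ U := fun u hu =>
    Reaches.rec_link (p := (· ∈ U)) hu hb₀U fun e a b he hl _ _ => (hl.inside_iff.1 he).2
  have hBB : ∀ u ∈ B, ∀ u' ∈ B, G.Reaches (G.Inside U) u u' := fun u hu u' hu' =>
    Reaches.trans (Reaches.symm hu) hu'
  have hexit : ∀ f a b, G.IsLink f a b → a ∉ B → b ∈ B → a ∈ W → a ∈ K := by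
    intro f a b hl ha hb haW
    by_contra haK
    exact ha (Reaches.trans hb (hl.symm.reaches (hl.inside_iff.2 ⟨⟨haW, haK⟩, hBU b hb⟩)))
  have hKF : ∀ f a b, G.IsLink f a b → a ∈ K → b ∈ B → a ∈ W → f ∈ F := by
    intro f a b hl ha hb haW
    by_contra hf
    exact (hBU b hb).2 (Reaches.trans ha (hl.reaches ⟨hf, hl.inside_iff.2 ⟨haW, (hBU b hb).1⟩⟩))
  have hKW : ∀ u ∈ K, u ∈ W := fun u hu =>
    Reaches.rec_link (p := (· ∈ W)) hu hz fun e a b he hl _ _ => (hl.inside_iff.1 he.2).2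
  -- Freeing an edge `f` between `K` and `B` leaves no connection, even if all of `U` may be used.
  have hfree : ∀ f a b, G.IsLink f a b → a ∈ K → b ∈ B → ∀ d d' q p q' p',
      G.IsLink d q p → p ∈ W → q ∉ W → G.IsLink d' q' p' → p' ∈ W → q' ∉ W →
      G.Reaches (fun e => (e ∈ F ∧ e ≠ f) ∨ G.Inside U e) p p' → d = d' := by
    intro f a b hl ha hb d d' q p q' p' hd hp hq hd' hp' hq' hr
    by_contra hdd
    have hbr : G.Bridges W {e | (e ∈ F ∧ e ≠ f) ∨ G.Inside U e} := by
      refine ⟨?_, fun i => cond i d d', fun i => cond i p p', fun i => cond i q q', hdd, ?_, hr⟩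
      · rintro e (he | he)
        · exact hF.1 e he.1
        · exact ⟨he.1.1, he.2.1⟩
      · rintro (_ | _)
        · exact ⟨hd', hp', hq'⟩
        · exact ⟨hd, hp, hq⟩
    have hsub : K ⊆ {u | G.Reaches (fun e => e ∉ {e | (e ∈ F ∧ e ≠ f) ∨ G.Inside U e} ∧
        G.Inside W e) z u} := fun u hu =>
      Reaches.rec_link (p := fun u => G.Reaches _ z u) hu (reaches_refl G _ z)
        fun e c c' he hl' hc ih => ih.trans <| hl'.reaches ⟨fun h => by
          rcases h with h | h
          · exact he.1 h.1
          · exact (hl'.inside_iff.1 h).1.2 hc, he.2⟩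
    refine absurd (hmax _ hbr) (not_le.2 (Set.ncard_lt_ncard ⟨hsub, fun h => ?_⟩
      (Set.toFinite _)))
    refine (hBU b hb).2 (h (Reaches.trans (hsub ha) (hl.reaches ⟨fun h => ?_, ?_⟩)))
    · rcases h with h | h
      · exact h.2 rfl
      · exact (hl.inside_iff.1 h).1.2 ha
    · exact hl.inside_iff.2 ⟨hKW a ha, (hBU b hb).1⟩
  obtain ⟨-, d, p, q, hd, hdpq, hpp⟩ := hF
  have hdinj : ∀ i j, d i = d j → i = j := by
    rintro (_ | _) (_ | _) h
    · rfl
    · exact absurd h.symm hd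
    · exact absurd h hd
    · rfl
  have hsep : ∀ f a b, G.IsLink f a b → a ∈ K → b ∈ B → ∀ i,
      ¬ G.Reaches (fun e => (e ∈ F ∧ e ≠ f) ∨ G.Inside U e) (p i) (p (!i)) := by
    intro f a b hl ha hb i hr
    have := hdinj _ _ (hfree f a b hl ha hb _ _ _ _ _ _ (hdpq i).1 (hdpq i).2.1 (hdpq i).2.2
      (hdpq (!i)).1 (hdpq (!i)).2.1 (hdpq (!i)).2.2 hr)
    cases i <;> simp at this
  -- Each edge between `K` and `B` is labelled by the end of the connection on its `K`-side.
  have hlabel : ∀ f a b, G.IsLink f a b → a ∈ K → b ∈ B → ∃ i,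
      G.Reaches (fun e => e ∈ F ∧ e ≠ f) (p i) a ∧
      G.Reaches (fun e => e ∈ F ∧ e ≠ f) (p (!i)) b := by
    intro f a b hl ha hb
    rcases hpp.split hl with h | h | h
    · exact absurd (h.mono fun e he => Or.inl he) (hsep f a b hl ha hb true)
    · exact ⟨true, h.1, h.2.symm⟩
    · exact ⟨false, h.2.symm, h.1⟩
  have hlabel_inj : ∀ f a b f' a' b', G.IsLink f a b → a ∈ K → b ∈ B →
      G.IsLink f' a' b' → a' ∈ K → b' ∈ B → ∀ i,
      G.Reaches (fun e => e ∈ F ∧ e ≠ f) (p i) a →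
      G.Reaches (fun e => e ∈ F ∧ e ≠ f) (p (!i)) b →
      G.Reaches (fun e => e ∈ F ∧ e ≠ f') (p i) a' →
      G.Reaches (fun e => e ∈ F ∧ e ≠ f') (p (!i)) b' → f = f' := by
    intro f a b f' a' b' hl ha hb hl' ha' hb' i h1 h2 h1' h2'
    by_contra hff
    have hfF := hKF f a b hl ha hb (hKW a ha)
    have hfF' := hKF f' a' b' hl' ha' hb' (hKW a' ha')
    have inl : ∀ {f u v}, G.Reaches (fun e => e ∈ F ∧ e ≠ f) u v →
        G.Reaches (fun e => (e ∈ F ∧ e ≠ f) ∨ G.Inside U e) u v :=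
      fun h => h.mono fun e he => Or.inl he
    have inr : ∀ {f u v}, u ∈ B → v ∈ B →
        G.Reaches (fun e => (e ∈ F ∧ e ≠ f) ∨ G.Inside U e) u v :=
      fun hu hv => (hBB _ hu _ hv).mono fun e he => Or.inr he
    rcases h1'.split hl with h | h | h
    · refine hsep f a b hl ha hb i ?_
      refine (inl (h.mono fun e he => ⟨he.1.1, he.2⟩)).trans ?_
      exact (inl (hl'.reaches ⟨hfF', Ne.symm hff⟩)).trans ((inr hb' hb).trans (inl h2.symm))
    · refine hsep f' a' b' hl' ha' hb' i ?_
      refine (inl (h.1.mono fun e he => he.1)).trans ?_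
      exact (inl (hl.reaches ⟨hfF, hff⟩)).trans ((inr hb hb').trans (inl h2'.symm))
    · refine hsep f a b hl ha hb i ?_
      exact (inl (h.1.mono fun e he => ⟨he.1.1, he.2⟩)).trans (inl h2.symm)
  have hboundary : ∀ g c w f a b i, G.IsLink g c w → c ∉ W → w ∈ B →
      G.IsLink f a b → a ∈ K → b ∈ B →
      G.Reaches (fun e => e ∈ F ∧ e ≠ f) (p (!i)) b → g = d (!i) := by
    intro g c w f a b i hg hc hw hl ha hb hr
    refine hfree f a b hl ha hb _ _ _ _ _ _ hg (hBU w hw).1 hc (hdpq _).1 (hdpq _).2.1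
      (hdpq _).2.2 (Reaches.trans ((hBB w hw b hb).mono fun e he => Or.inr he) ?_)
    exact hr.symm.mono fun e he => Or.inl he
  obtain ⟨f₀, a₀, c₀, hf₀W, hf₀, ha₀, hc₀⟩ := ((hconn b₀ hb₀W).symm).exists_exit
    (W := B) (reaches_refl G _ b₀) (fun h => (hBU z h).2 hzK)
  have ha₀K := hexit f₀ a₀ c₀ hf₀ ha₀ hc₀ (hf₀.inside_iff.1 hf₀W).1
  obtain ⟨i₀, -, hi₀⟩ := hlabel f₀ a₀ c₀ hf₀ ha₀K hc₀
  have hcut : ∀ g ∈ G.cutEdges B, ∃ i, (∃ a b, G.IsLink g a b ∧ a ∈ K ∧ b ∈ B ∧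
      G.Reaches (fun e => e ∈ F ∧ e ≠ g) (p i) a ∧
      G.Reaches (fun e => e ∈ F ∧ e ≠ g) (p (!i)) b) ∨
      (g = d i ∧ ∃ c w, G.IsLink g c w ∧ c ∉ W ∧ w ∈ B) := by
    intro g hg
    obtain ⟨a, b, hl, ha, hb⟩ := exists_isLink_of_mem_cutEdges hg
    by_cases haW : a ∈ W
    · have haK := hexit g a b hl ha hb haW
      obtain ⟨i, hi⟩ := hlabel g a b hl haK hb
      exact ⟨i, Or.inl ⟨a, b, hl, haK, hb, hi⟩⟩
    · exact ⟨!i₀, Or.inr ⟨hboundary g a b f₀ a₀ c₀ i₀ hl haW hb hf₀ ha₀K hc₀ hi₀,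
        a, b, hl, haW, hb⟩⟩
  choose! lab hlab using hcut
  have hinj : Set.InjOn lab (G.cutEdges B) := by
    intro g hg g' hg' hgg
    have h := hlab g hg
    have h' := hlab g' hg'
    rw [← hgg] at h'
    rcases h with ⟨a, b, hl, ha, hb, h1, h2⟩ | ⟨hgd, c, w, hl, hc, hw⟩ <;>
      rcases h' with ⟨a', b', hl', ha', hb', h1', h2'⟩ | ⟨hgd', c', w', hl', hc', hw'⟩
    · exact hlabel_inj g a b g' a' b' hl ha hb hl' ha' hb' _ h1 h2 h1' h2'
    · have := hdinj _ _ (hgd'.symm.trans (hboundary g' c' w' g a b _ hl' hc' hw' hl ha hb h2))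
      simp at this
    · have := hdinj _ _ (hgd.symm.trans (hboundary g c w g' a' b' _ hl hc hw hl' ha' hb' h2'))
      simp at this
    · rw [hgd, hgd']
  have hle : (G.cutEdges B).ncard ≤ (Set.univ : Set Bool).ncard :=
    Set.ncard_le_ncard_of_injOn lab (fun _ _ => Set.mem_univ _) hinj (Set.toFinite _)
  have h3 : 3 ≤ (G.cutEdges B).ncard :=
    hG.le_ncard_cutEdges (u := b₀) (v := z) (reaches_refl G _ b₀) fun h => (hBU z h).2 hzK
  rw [Set.ncard_univ, Nat.card_eq_fintype_card, Fintype.card_bool] at hle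
  omega

/-! ### Boundaries of edge functions -/

section Boundary

variable [Fintype E] {Γ : Type} [AddCommGroup Γ]

/-- Net outflow of `φ` at each vertex. -/
noncomputable def boundary (G : Multigraph V E) : (E → Γ) →+ (V → Γ) where
  toFun φ v := ∑ e : E, ((if G.src e = v then φ e else 0) - (if G.tgt e = v then φ e else 0))
  map_zero' := by ext; simp
  map_add' φ ψ := by
    ext v
    rw [Pi.add_apply, ← Finset.sum_add_distrib]
    refine Finset.sum_congr rfl fun e _ => ?_
    simp only [Pi.add_apply]
    split_ifs <;> abel

lemma boundary_apply (φ : E → Γ) (v : V) : G.boundary φ v =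
    ∑ e : E, ((if G.src e = v then φ e else 0) - (if G.tgt e = v then φ e else 0)) := rfl

lemma isFlow_iff {φ : E → Γ} : G.IsFlow φ ↔ ∀ v, G.boundary φ v = 0 := by
  simp only [IsFlow, boundary_apply, Finset.sum_sub_distrib, sub_eq_zero]

lemma sum_boundary [Fintype V] (φ : E → Γ) : ∑ v, G.boundary φ v = 0 := by
  simp only [boundary_apply]
  rw [Finset.sum_comm]
  simp [Finset.sum_sub_distrib]

/-- Conservation at all vertices but one implies conservation everywhere. -/
lemma isFlow_of_ne [Fintype V] {φ : E → Γ} (r : V) (h : ∀ v, v ≠ r → G.boundary φ v = 0) :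
    G.IsFlow φ := by
  rw [isFlow_iff]
  intro v
  by_cases hv : v = r
  · subst hv
    rw [← sum_boundary (G := G) φ, Finset.sum_eq_single v (fun u _ hu => h u hu) (by simp)]
  · exact h v hv

lemma boundary_congr {φ ψ : E → Γ} (h : ∀ e, G.src e = v ∨ G.tgt e = v → φ e = ψ e) :
    G.boundary φ v = G.boundary ψ v := by
  simp only [boundary_apply]
  refine Finset.sum_congr rfl fun e _ => ?_
  have := h e
  split_ifs <;> simp_all

lemma boundary_single (e : E) (c : Γ) : G.boundary (Pi.single e c) =
    Pi.single (G.src e) c - Pi.single (G.tgt e) c := by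
  ext v
  rw [boundary_apply, Finset.sum_eq_single e]
  · simp [Pi.single_apply, eq_comm]
  · intro e' _ he'
    simp [he']
  · simp

lemma IsLink.exists_boundary (h : G.IsLink e a b) (c : Γ) : ∃ c', (c' = c ∨ c' = -c) ∧
    G.boundary (Pi.single e c') = Pi.single a c - Pi.single b c := by
  rcases h with ⟨rfl, rfl⟩ | ⟨rfl, rfl⟩
  · exact ⟨c, Or.inl rfl, boundary_single e c⟩
  · refine ⟨-c, Or.inr rfl, ?_⟩
    rw [boundary_single, Pi.single_neg, Pi.single_neg]
    abel

lemma Reaches.exists_boundary (h : G.Reaches P u v) (c : Γ) : ∃ ψ : E → Γ,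
    (∀ e, ¬ P e → ψ e = 0) ∧ G.boundary ψ = Pi.single u c - Pi.single v c := by
  refine h.rec_link (p := fun v => ∃ ψ : E → Γ, (∀ e, ¬ P e → ψ e = 0) ∧
    G.boundary ψ = Pi.single u c - Pi.single v c) ⟨0, by simp, by simp⟩ fun e a b he hl _ ⟨ψ, hψ, hb⟩ => ?_
  obtain ⟨c', -, hc'⟩ := hl.exists_boundary c
  refine ⟨ψ + Pi.single e c', fun e' he' => ?_, ?_⟩
  · have : e' ≠ e := fun h => he' (h ▸ he)
    simp [hψ e' he', this]
  · rw [map_add, hb, hc']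
    abel

/-- Every demand on a set `Q` reachable from a root is met up to the root. -/
lemma exists_boundary_eq [Fintype V] {Q : Set V} {r : V} (hQ : ∀ v ∈ Q, G.Reaches P v r)
    (d : V → Γ) : ∃ ψ : E → Γ, (∀ e, ¬ P e → ψ e = 0) ∧
      ∀ v, v ≠ r → G.boundary ψ v = if v ∈ Q then d v else 0 := by
  have : ∀ v, ∃ ψ : E → Γ, v ∈ Q → (∀ e, ¬ P e → ψ e = 0) ∧
      G.boundary ψ = Pi.single v (d v) - Pi.single r (d v) := fun v => by
    by_cases hv : v ∈ Q
    · obtain ⟨ψ, h⟩ := (hQ v hv).exists_boundary (d v)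
      exact ⟨ψ, fun _ => h⟩
    · exact ⟨0, fun h => absurd h hv⟩
  choose ψ hψ using this
  refine ⟨∑ v with v ∈ Q, ψ v, fun e he => ?_, fun v hv => ?_⟩
  · rw [Finset.sum_apply]
    exact Finset.sum_eq_zero fun v hv => (hψ v (Finset.mem_filter.1 hv).2).1 e he
  · rw [map_sum, Finset.sum_apply, Finset.sum_filter, Finset.sum_eq_single v]
    · split_ifs with h
      · rw [(hψ v h).2]
        simp [hv]
      · rfl
    · intro u _ hu
      split_ifs with h
      · rw [(hψ u h).2]
        simp [hv, Ne.symm hu]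
      · rfl
    · simp

/-- If `G - S` is connected, some flow avoids prescribed values on `S`. -/
lemma ConnectedVia.exists_isFlow [Fintype V] [Nontrivial Γ] {S : Set E}
    (h : G.ConnectedVia fun e => e ∉ S) (f : E → Γ) :
    ∃ φ : E → Γ, G.IsFlow φ ∧ ∀ e ∈ S, φ e ≠ f e := by
  obtain ⟨⟨r⟩, hr⟩ := h
  obtain ⟨c, hc⟩ := exists_ne (0 : Γ)
  obtain ⟨ψ, hψ, hb⟩ := exists_boundary_eq (Q := Set.univ) (fun v _ => hr v r)
    (-G.boundary fun e => f e + c)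
  refine ⟨(fun e => f e + c) + ψ, isFlow_of_ne r fun v hv => ?_, fun e he => ?_⟩
  · rw [map_add, Pi.add_apply, hb v hv]
    simp
  · simp [hψ e (not_not.2 he), hc]

end Boundary

/-! ### Extending a ternary flow over two boundary edges -/

lemma exists_avoid_two (a b s t : ZMod 3) (hs : s = 1 ∨ s = -1) (ht : t = 1 ∨ t = -1) :
    ∃ c : ZMod 3, c * s ≠ a ∧ c * t ≠ b := by
  revert a b s t
  decide

/-- A function conserved outside `X ∪ Q` can be made conserved outside `X`, if `Q` is connected by
unconstrained edges and two further edges join `Q` to `X`. -/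
lemma exists_extension [Fintype V] [Fintype E] {Q : Set V} {F : Set E} {d : Bool → E}
    {p q : Bool → V} (hFQ : ∀ e ∈ F, G.Inside Q e)
    (hd : d true ≠ d false) (hdpq : ∀ i, G.IsLink (d i) (q i) (p i) ∧ p i ∈ Q ∧ q i ∈ X)
    (hQ : ∀ v ∈ Q, G.Reaches (· ∈ F) (p true) v) (f φ : E → ZMod 3)
    (hφ : ∀ v ∉ X ∪ Q, G.boundary φ v = 0) :
    ∃ φ' : E → ZMod 3, (∀ v ∉ X, G.boundary φ' v = 0) ∧
      (∀ e, ¬ G.Inside (X ∪ Q) e → φ' e = φ e) ∧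
      ∀ e, G.Inside (X ∪ Q) e → ¬ G.Inside X e → e ∉ F → φ' e ≠ f e := by
  have hdI : ∀ i, G.Inside (X ∪ Q) (d i) := fun i =>
    (hdpq i).1.inside_iff.2 ⟨Or.inl (hdpq i).2.2, Or.inr (hdpq i).2.1⟩
  have hFI : ∀ e ∈ F, G.Inside (X ∪ Q) e := fun e he =>
    ⟨Or.inr (hFQ e he).1, Or.inr (hFQ e he).2⟩
  set φ₀ : E → ZMod 3 := fun e => if G.Inside (X ∪ Q) e then f e + 1 else φ e with hφ₀
  have hφ₀b : ∀ v ∉ X ∪ Q, G.boundary φ₀ v = 0 := fun v hv => by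
    rw [← hφ v hv]
    refine boundary_congr fun e he => if_neg fun hI => hv ?_
    rcases he with rfl | rfl
    exacts [hI.1, hI.2]
  obtain ⟨ψ, hψ, hψb⟩ := exists_boundary_eq (G := G) (P := fun e => e ∈ F ∨ e = d true) (Q := Q)
    (r := q true) (fun v hv => ((hQ v hv).symm.mono fun e he => Or.inl he).trans
      ((hdpq true).1.symm.reaches (Or.inr rfl))) (-G.boundary φ₀)
  obtain ⟨χ, hχ, hχb⟩ := (hQ _ (hdpq false).2.1).exists_boundary (1 : ZMod 3)
  obtain ⟨s, hs, hsb⟩ := (hdpq true).1.exists_boundary (1 : ZMod 3)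
  obtain ⟨t, ht, htb⟩ := (hdpq false).1.symm.exists_boundary (1 : ZMod 3)
  obtain ⟨c, hc₁, hc₂⟩ := exists_avoid_two (-(1 + ψ (d true))) (-1) s t hs ht
  -- `θ` is a unit circulation in `G / X` through both boundary edges.
  set θ : E → ZMod 3 := χ + Pi.single (d true) s + Pi.single (d false) t with hθ
  have hcirc : ∀ v ∉ X, G.boundary (fun e => c * θ e) v = 0 := by
    intro v hv
    have h1 : v ≠ q true := fun h => hv (h ▸ (hdpq true).2.2)
    have h2 : v ≠ q false := fun h => hv (h ▸ (hdpq false).2.2)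
    have h : G.boundary θ v = 0 := by
      rw [hθ, map_add, map_add, hχb, hsb, htb]
      simp [h1, h2]
    rw [boundary_apply] at h ⊢
    simpa only [Finset.mul_sum, mul_sub, mul_ite, mul_zero] using congrArg (c * ·) h
  refine ⟨φ₀ + ψ + fun e => c * θ e,
    fun v hv => ?_, fun e he => ?_, fun e he heX heF => ?_⟩
  · have h1 : v ≠ q true := fun h => hv (h ▸ (hdpq true).2.2)
    rw [map_add, map_add, Pi.add_apply, Pi.add_apply, hcirc v hv, hψb v h1]
    split_ifs with h
    · simp
    · rw [hφ₀b v (by simp [hv, h])]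
      simp
  · have hF : e ∉ F := fun h => he (hFI e h)
    have ht : e ≠ d true := fun h => he (h ▸ hdI true)
    have hf : e ≠ d false := fun h => he (h ▸ hdI false)
    simp [hφ₀, hθ, he, hψ e (by simp [hF, ht]), hχ e hF, ht, hf]
  · by_cases h1 : e = d true
    · subst h1
      simp only [hφ₀, hθ, Pi.add_apply, if_pos he, hχ _ heF, Pi.single_eq_same,
        Pi.single_eq_of_ne hd, zero_add, add_zero]
      intro h
      exact hc₁ (by linear_combination h)
    · by_cases h2 : e = d false
      · subst h2
        simp only [hφ₀, hθ, Pi.add_apply, if_pos he, hχ _ heF, Pi.single_eq_same,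
          Pi.single_eq_of_ne h1, hψ _ (not_or.2 ⟨heF, h1⟩), zero_add, add_zero]
        intro h
        exact hc₂ (by linear_combination h)
      · simp [hφ₀, hθ, he, hψ e (by simp [heF, h1]), hχ e heF, h1, h2]

/-! ### Peripheral sets carrying the ternary defects -/

/-- Outside a proper nonempty set `X` there is a set `Q`, joined to `X` by two edges, and connected
by edges whose removal keeps the rest of the graph connected. -/
lemma exists_attachment [Finite V] [Finite E] (hG : G.EdgeConnected 3) {S : Set E}
    (hXne : X.Nonempty) (hv : v ∉ X) (hS : ∀ e ∈ S, G.Inside X e)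
    (hSconn : G.ConnectedVia fun e => e ∉ S) :
    ∃ (Q : Set V) (F : Set E) (d : Bool → E) (p q : Bool → V),
      (∀ v ∈ Q, v ∉ X) ∧ (∀ e ∈ F, G.Inside Q e) ∧ d true ≠ d false ∧
      (∀ i, G.IsLink (d i) (q i) (p i) ∧ p i ∈ Q ∧ q i ∈ X) ∧
      (∀ v ∈ Q, G.Reaches (· ∈ F) (p true) v) ∧ G.ConnectedVia fun e => e ∉ S ∪ F := by
  set W : Set V := {u | G.Reaches (G.Inside Xᶜ) v u} with hW
  have hvW : v ∈ W := reaches_refl G _ v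
  have hWX : ∀ u ∈ W, u ∉ X := fun u hu =>
    Reaches.rec_link (p := (· ∉ X)) hu hv fun e a b he hl _ _ => (hl.inside_iff.1 he).2
  have hconn : ∀ u ∈ W, G.Reaches (G.Inside W) v u := fun u hu =>
    Reaches.rec_link (p := fun u => G.Reaches (G.Inside W) v u) hu (reaches_refl G _ v)
      fun e a b he hl ha ih => ih.trans <| hl.reaches <|
        hl.inside_iff.2 ⟨ha, Reaches.trans ha (hl.reaches he)⟩
  obtain ⟨x, hx⟩ := hXne
  obtain ⟨F, ⟨hFW, d, p, q, hd, hdpq, hpp⟩, hF⟩ :=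
    exists_bridges_nonseparating hG hvW (fun h => hWX x h hx) hconn
  set Q : Set V := {u | G.Reaches (· ∈ F) (p true) u} with hQ
  have hQW : ∀ u ∈ Q, u ∈ W := fun u hu =>
    Reaches.rec_link (p := (· ∈ W)) hu (hdpq true).2.1
      fun e a b he hl _ _ => (hl.inside_iff.1 (hFW e he)).2
  refine ⟨Q, {e ∈ F | G.Inside Q e}, d, p, q, fun u hu => hWX u (hQW u hu), fun e he => he.2, hd,
    fun i => ⟨(hdpq i).1, ?_, ?_⟩, fun u hu => ?_, hSconn.1, fun u u' => ?_⟩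
  · cases i
    · exact hpp
    · exact reaches_refl G _ _
  · by_contra hqX
    have hp := (hdpq i).2.1
    exact (hdpq i).2.2 (Reaches.trans hp ((hdpq i).1.symm.reaches
      ((hdpq i).1.symm.inside_iff.2 ⟨hWX _ hp, hqX⟩)))
  · exact Reaches.rec_link (p := fun u => G.Reaches _ (p true) u) hu (reaches_refl G _ _)
      fun e a b he hl ha ih => ih.trans <| hl.reaches
        ⟨he, hl.inside_iff.2 ⟨ha, Reaches.trans ha (hl.reaches he)⟩⟩
  · refine (hSconn.2 u u').bind fun e he => ?_
    by_cases heF : e ∈ F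
    · refine Reaches.mono ?_ ((hF _ (hFW e heF).1).symm.trans (hF _ (hFW e heF).2))
      rintro g ⟨hg, hgW⟩ (h | h)
      · exact hWX _ hgW.1 (hS g h).1
      · exact hg h.1
    · exact (isLink_src_tgt G e).reaches fun h => h.elim he fun h => heF h.1

/-- A set `S` of edges inside `X` with `G - S` connected extends to a set `S'` with `G - S'`
connected, such that off `S'` prescribed ternary values can be avoided in `G / X`. -/
lemma exists_peripheral_base [Fintype V] [Fintype E] (hG : G.EdgeConnected 3) (S : Set E)
    (X : Set V) (hX : X.Nonempty) (hS : ∀ e ∈ S, G.Inside X e)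
    (hSconn : G.ConnectedVia fun e => e ∉ S) :
    ∃ S', S ⊆ S' ∧ (G.ConnectedVia fun e => e ∉ S') ∧ ∀ f : E → ZMod 3, ∃ φ : E → ZMod 3,
      (∀ v ∉ X, G.boundary φ v = 0) ∧ ∀ e, ¬ G.Inside X e → e ∉ S' → φ e ≠ f e := by
  induction hn : Xᶜ.ncard using Nat.strong_induction_on generalizing S X with
  | _ n ih =>
  by_cases hXu : ∀ v, v ∈ X
  · exact ⟨S, subset_rfl, hSconn, fun f => ⟨0, fun v hv => absurd (hXu v) hv,
      fun e he => absurd ⟨hXu _, hXu _⟩ he⟩⟩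
  push Not at hXu
  obtain ⟨v, hv⟩ := hXu
  obtain ⟨Q, F, d, p, q, hQX, hFQ, hd, hdpq, hQ, hconn⟩ := exists_attachment hG hX hv hS hSconn
  have hlt : (X ∪ Q)ᶜ.ncard < n := by
    rw [← hn]
    refine Set.ncard_lt_ncard ⟨Set.compl_subset_compl.2 Set.subset_union_left, fun h => ?_⟩
      (Set.toFinite _)
    exact h (hQX _ (hdpq true).2.1) (Or.inr (hdpq true).2.1)
  obtain ⟨S', hSS', hS', hflow⟩ := ih _ hlt (S ∪ F) (X ∪ Q) (hX.mono Set.subset_union_left)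
    (fun e he => he.elim (fun h => ⟨Or.inl (hS e h).1, Or.inl (hS e h).2⟩)
      fun h => ⟨Or.inr (hFQ e h).1, Or.inr (hFQ e h).2⟩) hconn rfl
  refine ⟨S', Set.subset_union_left.trans hSS', hS', fun f => ?_⟩
  obtain ⟨φ, hφ, hφf⟩ := hflow f
  obtain ⟨φ', hφ', heq, hne⟩ := exists_extension hFQ hd hdpq hQ f φ hφ
  refine ⟨φ', hφ', fun e heX heS => ?_⟩
  by_cases he : G.Inside (X ∪ Q) e
  · exact hne e he heX fun h => heS (hSS' (Or.inr h))
  · rw [heq e he]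
    exact hφf e he heS

/-- A 3-edge-connected graph has an edge set `S` with `G - S` connected such that ternary flows can
avoid any prescribed values off `S`. -/
theorem exists_peripheral_ternary_flows [Fintype V] [Fintype E] (hG : G.EdgeConnected 3) :
    ∃ S : Set E, (G.ConnectedVia fun e => e ∉ S) ∧ ∀ f : E → ZMod 3, ∃ φ : E → ZMod 3,
      G.IsFlow φ ∧ ∀ e ∉ S, φ e ≠ f e := by
  have h0 := hG ∅ (by simp)
  obtain ⟨r⟩ := h0.1
  obtain ⟨S, -, hS, hflow⟩ := exists_peripheral_base hG ∅ {r} ⟨r, rfl⟩ (by simp) h0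
  refine ⟨S, hS, fun f => ?_⟩
  obtain ⟨φ, hφ, hφf⟩ := hflow f
  refine ⟨fun e => if G.Inside {r} e then f e + 1 else φ e, isFlow_of_ne r fun v hv => ?_,
    fun e he => ?_⟩
  · rw [← hφ v hv]
    refine boundary_congr fun e he => if_neg fun hI => hv ?_
    rcases he with rfl | rfl
    exacts [hI.1, hI.2]
  · dsimp only
    split_ifs with h
    · simp
    · exact hφf e h he

end Multigraph

/-- Every oriented 3-edge-connected graph is `ℤ₆`-connected: for every `f : E → ℤ₆`
there is a flow `φ` with `φ(e) ≠ f(e)` for every edge `e`. -/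
theorem threeEdgeConnected_is_Z6_connected {V E : Type} [Fintype V] [Fintype E]
    (G : Multigraph V E) (hG : G.EdgeConnected 3) (f : E → ZMod 6) :
    ∃ φ : E → ZMod 6, G.IsFlow φ ∧ ∀ e : E, φ e ≠ f e := by
  obtain ⟨S, hS, hflow⟩ := Multigraph.exists_peripheral_ternary_flows hG
  let ε : ZMod 6 ≃+* ZMod 2 × ZMod 3 := ZMod.chineseRemainder (show Nat.Coprime 2 3 by decide)
  obtain ⟨α, hα, hαf⟩ := hS.exists_isFlow fun e => (ε (f e)).1
  obtain ⟨β, hβ, hβf⟩ := hflow fun e => (ε (f e)).2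
  refine ⟨fun e => ε.symm (α e, β e), fun v => ε.injective ?_, fun e he => ?_⟩
  · simp only [map_sum, apply_ite ε, map_zero, RingEquiv.apply_symm_apply]
    refine Prod.ext ?_ ?_
    · simpa only [Prod.fst_sum, apply_ite Prod.fst, Prod.fst_zero] using hα v
    · simpa only [Prod.snd_sum, apply_ite Prod.snd, Prod.snd_zero] using hβ v
  · have h : (α e, β e) = ε (f e) := by rw [← he, RingEquiv.apply_symm_apply]
    by_cases heS : e ∈ S
    · exact hαf e heS (congrArg Prod.fst h)
    · exact hβf e heS (congrArg Prod.snd h)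
end
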